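/- arXiv:1912.08951 — 4 statements merged into one kernel-verified Lean document; each statement's English description precedes it below -/
import Mathlib

section
/- Let b, c, m ∈ ℕ and ε > 0. If there exists an ε-differentially private algorithm A : ({0,1}^c × {0,1}^b × {0,1})^m → PMF(functions {0,1}^c × {0,1}^b → {0,1}) that is a (1/4,1/4)-PAC learner for ParityThresh_{b,c} with sample complexity m, then there exists an ε-differentially private algorithm B : ({0,1}^b × {0,1})^m → PMF(functions {0,1}^b → {0,1}) that is a (1/4,1/4)-PAC learner for Threshold_b with sample complexity m. -/
open scoped ENNReal

/-- Two databases of size `m` are neighboring if they differ in at most one entry. -/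
def Neighbor {X : Type*} {m : ℕ} (x x' : Fin m → X) : Prop :=
  ∃ i : Fin m, ∀ j : Fin m, j ≠ i → x j = x' j

/-- The probability that a sample from `P` lands in the set `T`. -/
noncomputable def prOf {Y : Type*} (P : PMF Y) (T : Set Y) : ℝ≥0∞ :=
  P.toOuterMeasure T

/-- `ε`-differential privacy for a mechanism operating on databases of size `m`. -/
def DPAlg {X Y : Type*} {m : ℕ} (ε : ℝ) (A : (Fin m → X) → PMF Y) : Prop :=
  ∀ x x' : Fin m → X, Neighbor x x' → ∀ T : Set Y,
    prOf (A x) T ≤ ENNReal.ofReal (Real.exp ε) * prOf (A x') T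

/-- `ε`-differential privacy for a local randomizer. -/
def DPRand {X Y : Type*} (ε : ℝ) (R : X → PMF Y) : Prop :=
  ∀ x x' : X, ∀ T : Set Y,
    prOf (R x) T ≤ ENNReal.ofReal (Real.exp ε) * prOf (R x') T

/-- `m` i.i.d. samples from the distribution `D`. -/
noncomputable def iid {Z : Type*} (D : PMF Z) : (m : ℕ) → PMF (Fin m → Z)
  | 0 => PMF.pure (fun i => i.elim0)
  | m + 1 => (iid D m).bind fun f => D.bind fun z => PMF.pure (Fin.cons z f)

/-- Independent product of finitely many PMFs. -/
noncomputable def pmfPi : (n : ℕ) → {T : Fin n → Type} → (∀ i, PMF (T i)) → PMF (∀ i, T i)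
  | 0, _, _ => PMF.pure (fun i => i.elim0)
  | n + 1, T, P =>
      (P 0).bind fun t0 =>
        (@pmfPi n (fun i => T i.succ) (fun i => P i.succ)).bind fun ts =>
          PMF.pure (Fin.cons t0 ts)

/-- XOR of a finite family of bits. -/
def xorFold {I : Type*} [Fintype I] (f : I → Bool) : Bool :=
  decide ((Finset.univ.filter (fun i => f i = true)).card % 2 = 1)

/-- The parity function `Par_k(x) = ⊕ k_i x_i`. -/
def Par {c : ℕ} (k x : Fin c → Bool) : Bool := xorFold (fun i => k i && x i)

/-- Interpret a bit string as an integer in `{0, …, 2^b − 1}`. -/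
def bitsToNat {b : ℕ} (y : Fin b → Bool) : ℕ :=
  ∑ i : Fin b, if y i then 2 ^ (i : ℕ) else 0

/-- The threshold function `Thr_t(y) = 1` iff `y ≥ t`. -/
def Thr {b : ℕ} (t y : Fin b → Bool) : Bool := decide (bitsToNat t ≤ bitsToNat y)

/-- Generalization error of hypothesis `h` w.r.t. target `c` under distribution `D`. -/
noncomputable def errD {Z L : Type*} (D : PMF Z) (c h : Z → L) : ℝ≥0∞ :=
  prOf D {z | h z ≠ c z}

/-- `(α, β)`-PAC learning for the concept class `C` with sample complexity `m`:
for every concept in `C` and distribution `D` on the domain, when the `m` examples are drawn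
i.i.d. from `D` and labeled by the concept, with probability at least `1 − β` the output
hypothesis has generalization error at most `α`. -/
def PACLearner {Z L : Type*} {m : ℕ} (α β : ℝ) (C : Set (Z → L))
    (A : (Fin m → Z × L) → PMF (Z → L)) : Prop :=
  ∀ c ∈ C, ∀ D : PMF Z,
    ENNReal.ofReal (1 - β) ≤
      prOf ((iid D m).bind fun s => A (fun i => (s i, c (s i))))
        {h | errD D c h ≤ ENNReal.ofReal α}

/-- The class `ParityThresh_{b,c}` of functions `f^{k,t}(x,y) = Par_k(x) ⊕ Thr_t(y)`. -/
def ParityThresh (b c : ℕ) : Set ((Fin c → Bool) × (Fin b → Bool) → Bool) :=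
  {f | ∃ (k : Fin c → Bool) (t : Fin b → Bool), f = fun p => xor (Par k p.1) (Thr t p.2)}

/-- The class `Threshold_b` of threshold functions. -/
def ThresholdClass (b : ℕ) : Set ((Fin b → Bool) → Bool) :=
  {f | ∃ t : Fin b → Bool, f = fun y => Thr t y}

/-!
Restricting `ParityThresh_{b,c}` to the points `(0, y)` gives exactly `Threshold_b`, because every
parity vanishes at the zero string. A learner can be pulled back along any map `f` of domains:
replace each example point `x` by `f x`, run the learner, and precompose its hypothesis with `f`.
The replaced points are i.i.d. from the pushforward of `D` along `f`, so the learner's guarantee for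
that distribution is the required guarantee for `D`. Privacy survives because changing one example
changes only its own replacement, and the precomposition never looks at the data.
-/

theorem prOf_map {X Y : Type*} (f : X → Y) (P : PMF X) (T : Set Y) :
    prOf (P.map f) T = prOf P (f ⁻¹' T) :=
  PMF.toOuterMeasure_map_apply f P T

theorem errD_map {X Z L : Type*} (f : X → Z) (D : PMF X) (c h : Z → L) :
    errD (D.map f) c h = errD D (c ∘ f) (h ∘ f) :=
  prOf_map f D _

theorem iid_map {X Y : Type*} (f : X → Y) (D : PMF X) (m : ℕ) :
    iid (D.map f) m = (iid D m).map (f ∘ ·) := by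
  induction m with
  | zero =>
    rw [iid, iid, PMF.pure_map]
    exact congrArg PMF.pure (Subsingleton.elim _ _)
  | succ m ih =>
    simp only [iid, ih, PMF.map_bind, PMF.bind_map, PMF.pure_map, Fin.comp_cons]
    rfl

theorem Neighbor.map {X Y : Type*} {m : ℕ} {x x' : Fin m → X} (h : Neighbor x x') (f : X → Y) :
    Neighbor (f ∘ x) (f ∘ x') :=
  let ⟨i, hi⟩ := h
  ⟨i, fun j hj => congrArg f (hi j hj)⟩

theorem DPAlg.preprocess {X X' Y : Type*} {m : ℕ} {ε : ℝ} {A : (Fin m → X) → PMF Y}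
    (hA : DPAlg ε A) (f : X' → X) : DPAlg ε fun s : Fin m → X' => A (f ∘ s) :=
  fun _ _ h => hA _ _ (h.map f)

theorem DPAlg.postprocess {X Y Y' : Type*} {m : ℕ} {ε : ℝ} {A : (Fin m → X) → PMF Y}
    (hA : DPAlg ε A) (g : Y → Y') : DPAlg ε fun s => (A s).map g := by
  intro x x' h T
  simpa only [prOf_map] using hA x x' h (g ⁻¹' T)

/-- The pullback of a learner along a map `f : X → Z` of domains: it moves the examples to `Z`
along `f`, keeping their labels, and restricts the learned hypothesis to `X` along `f`. -/
noncomputable def pullbackLearner {X Z L : Type*} {m : ℕ} (f : X → Z)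
    (A : (Fin m → Z × L) → PMF (Z → L)) (s : Fin m → X × L) : PMF (X → L) :=
  (A (Prod.map f id ∘ s)).map (· ∘ f)

section PullbackLearner

variable {X Z L : Type*} {m : ℕ} {A : (Fin m → Z × L) → PMF (Z → L)}

theorem DPAlg.pullbackLearner {ε : ℝ} (hA : DPAlg ε A) (f : X → Z) :
    DPAlg ε (pullbackLearner f A) :=
  (hA.preprocess (Prod.map f id)).postprocess (· ∘ f)

theorem iid_bind_pullbackLearner (f : X → Z) (D : PMF X) (c : Z → L) :
    ((iid D m).bind fun s => pullbackLearner f A fun i => (s i, (c ∘ f) (s i))) =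
      ((iid (D.map f) m).bind fun s => A fun i => (s i, c (s i))).map (· ∘ f) := by
  rw [iid_map, PMF.bind_map, PMF.map_bind]
  rfl

theorem PACLearner.pullbackLearner {α β : ℝ} {C : Set (Z → L)} (hA : PACLearner α β C A)
    (f : X → Z) : PACLearner α β ((· ∘ f) '' C) (pullbackLearner f A) := by
  rintro _ ⟨c, hc, rfl⟩ D
  rw [iid_bind_pullbackLearner, prOf_map]
  simpa only [errD_map, Set.preimage_ofPred_eq] using hA c hc (D.map f)

end PullbackLearner

theorem Par_zero_right {c : ℕ} (k : Fin c → Bool) : Par k (fun _ => false) = false := by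
  simp [Par, xorFold]

theorem image_parityThresh_eq_thresholdClass (b c : ℕ) :
    (· ∘ Prod.mk fun _ => false) '' ParityThresh b c = ThresholdClass b := by
  have restrict_apply (k : Fin c → Bool) (t : Fin b → Bool) :
      (fun p : (Fin c → Bool) × (Fin b → Bool) => xor (Par k p.1) (Thr t p.2)) ∘
        Prod.mk (fun _ => false) = fun y => Thr t y := by
    funext y
    simp only [Function.comp_apply, Par_zero_right, Bool.false_xor]
  ext g
  constructor
  · rintro ⟨_, ⟨k, t, rfl⟩, rfl⟩
    exact ⟨t, restrict_apply k t⟩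
  · rintro ⟨t, rfl⟩
    exact ⟨_, ⟨fun _ => false, t, rfl⟩, restrict_apply _ t⟩

theorem stmt_0_general (b c m : ℕ) (α β ε : ℝ)
    (A : (Fin m → ((Fin c → Bool) × (Fin b → Bool)) × Bool) →
          PMF ((Fin c → Bool) × (Fin b → Bool) → Bool))
    (hDP : DPAlg ε A) (hPAC : PACLearner α β (ParityThresh b c) A) :
    ∃ B : (Fin m → (Fin b → Bool) × Bool) → PMF ((Fin b → Bool) → Bool),
      DPAlg ε B ∧ PACLearner α β (ThresholdClass b) B := by
  rw [← image_parityThresh_eq_thresholdClass b c]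
  exact ⟨_, hDP.pullbackLearner _, hPAC.pullbackLearner _⟩

/-- from an `ε`-DP `(1/4,1/4)`-PAC learner for `ParityThresh_{b,c}` with sample
complexity `m` one obtains an `ε`-DP `(1/4,1/4)`-PAC learner for `Threshold_b` with sample
complexity `m`. -/
theorem stmt_0 (b c m : ℕ) (ε : ℝ) (hε : 0 < ε)
    (A : (Fin m → ((Fin c → Bool) × (Fin b → Bool)) × Bool) →
          PMF ((Fin c → Bool) × (Fin b → Bool) → Bool))
    (hDP : DPAlg ε A)
    (hPAC : PACLearner (1/4) (1/4) (ParityThresh b c) A) :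
    ∃ B : (Fin m → (Fin b → Bool) × Bool) → PMF ((Fin b → Bool) → Bool),
      DPAlg ε B ∧ PACLearner (1/4) (1/4) (ThresholdClass b) B :=
  stmt_0_general b c m _ _ ε A hDP hPAC
end

section
/- There is a constant C > 0 such that for all b, c, m ∈ ℕ and all ε > 0: every ε-differentially private algorithm in the curator model that is a (1/4,1/4)-PAC learner for ParityThresh_{b,c} with sample complexity m satisfies m ≥ C·b/ε. -/
open scoped ENNReal

/-!
A private learner puts comparable mass on every set of hypotheses whatever its database is: `m`
changes of one entry turn any database into any other, so the masses differ by a factor of at most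
`exp (m * ε)`. Hence if each hypothesis is accurate for at most `N` out of `n` pairs of a concept
and a distribution, then `(1 - β) * n ≤ exp (m * ε) * N`.

Many such pairs come from a Littlestone tree of depth `d`: to each of its `2 ^ d` branches attach a
concept realizing it and the uniform distribution on its nodes. A hypothesis errs along a branch on
a set of levels, and this set determines the branch, so the hypothesis is `α`-accurate for at most
as many branches as there are subsets of `Fin d` of size at most `α * d`, an exponentially small
fraction of all subsets by Hoeffding's inequality. For thresholds on `b` bits, binary search is a
Littlestone tree of depth `b`.
-/

section PrivateLearning

open scoped Finset

variable {X Y Z L ι : Type*} {m : ℕ} {α β ε : ℝ}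

theorem Neighbor.update_left (x : Fin m → X) (i : Fin m) (a : X) :
    Neighbor (Function.update x i a) x :=
  ⟨i, fun _ hj => Function.update_of_ne hj a x⟩

theorem DPAlg.prOf_piecewise_le {A : (Fin m → X) → PMF Y} (hA : DPAlg ε A) (x x' : Fin m → X)
    (s : Finset (Fin m)) (T : Set Y) :
    prOf (A (s.piecewise x x')) T ≤ ENNReal.ofReal (Real.exp ε) ^ #s * prOf (A x') T := by
  induction s using Finset.induction_on with
  | empty => simp
  | insert i s hi ih =>
    rw [Finset.piecewise_insert, Finset.card_insert_of_notMem hi, pow_succ', mul_assoc]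
    exact (hA _ _ (Neighbor.update_left _ _ _) T).trans (by gcongr)

theorem DPAlg.group_privacy {A : (Fin m → X) → PMF Y} (hA : DPAlg ε A) (x x' : Fin m → X)
    (T : Set Y) : prOf (A x) T ≤ ENNReal.ofReal (Real.exp (m * ε)) * prOf (A x') T := by
  simpa [Real.exp_nat_mul, ENNReal.ofReal_pow (Real.exp_pos ε).le] using
    hA.prOf_piecewise_le x x' Finset.univ T

theorem prOf_bind_le {P : PMF X} {A : X → PMF Y} {T : Set Y} {r : ℝ≥0∞}
    (h : ∀ x, prOf (A x) T ≤ r) : prOf (P.bind A) T ≤ r := by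
  calc prOf (P.bind A) T = ∑' x, P x * prOf (A x) T := PMF.toOuterMeasure_bind_apply P A T
    _ ≤ ∑' x, P x * r := by gcongr; exact h _
    _ = r := by rw [ENNReal.tsum_mul_right, P.tsum_coe, one_mul]

open Classical in
theorem sum_prOf_le_of_card_le [Fintype ι] (P : PMF Y) {G : ι → Set Y} {N : ℕ}
    (hN : ∀ y, #{t | y ∈ G t} ≤ N) : ∑ t, prOf P (G t) ≤ N := by
  calc ∑ t, prOf P (G t) = ∑' y, ∑ t, (G t).indicator P y := by
        simp only [prOf, PMF.toOuterMeasure_apply]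
        exact (Summable.tsum_finsetSum fun _ _ => ENNReal.summable).symm
    _ = ∑' y, #{t | y ∈ G t} * P y := by
        simp only [Set.indicator_apply, ← Finset.sum_filter, Finset.sum_const, nsmul_eq_mul]
    _ ≤ ∑' y, N * P y := by gcongr; exact hN _
    _ = N := by rw [ENNReal.tsum_mul_left, P.tsum_coe, mul_one]

open Classical in
theorem PACLearner.mul_card_le_of_card_accurate_le [Fintype ι] {C : Set (Z → L)}
    {A : (Fin m → Z × L) → PMF (Z → L)} (hPAC : PACLearner α β C A) (hA : DPAlg ε A)
    (x₀ : Fin m → Z × L) {c : ι → Z → L} (hc : ∀ t, c t ∈ C) (D : ι → PMF Z) {N : ℕ}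
    (hN : ∀ h, #{t | errD (D t) (c t) h ≤ ENNReal.ofReal α} ≤ N) :
    (1 - β) * Fintype.card ι ≤ Real.exp (m * ε) * N := by
  let accurate (t : ι) : Set (Z → L) := {h | errD (D t) (c t) h ≤ ENNReal.ofReal α}
  have accurate_mass (t : ι) : ENNReal.ofReal (1 - β) ≤
      ENNReal.ofReal (Real.exp (m * ε)) * prOf (A x₀) (accurate t) :=
    (hPAC (c t) (hc t) (D t)).trans (prOf_bind_le fun s => hA.group_privacy _ x₀ _)
  have total_mass : ENNReal.ofReal (1 - β) * Fintype.card ι ≤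
      ENNReal.ofReal (Real.exp (m * ε)) * N :=
    calc ENNReal.ofReal (1 - β) * Fintype.card ι
        = ∑ _t : ι, ENNReal.ofReal (1 - β) := by simp [mul_comm]
      _ ≤ ∑ t, ENNReal.ofReal (Real.exp (m * ε)) * prOf (A x₀) (accurate t) :=
          Finset.sum_le_sum fun t _ => accurate_mass t
      _ ≤ ENNReal.ofReal (Real.exp (m * ε)) * N := by
          rw [← Finset.mul_sum]
          gcongr
          exact sum_prOf_le_of_card_le _ fun h => by simpa [accurate] using hN h
  rwa [← ENNReal.ofReal_natCast, ← ENNReal.ofReal_natCast,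
    ← ENNReal.ofReal_mul' (Nat.cast_nonneg _), ← ENNReal.ofReal_mul' (Nat.cast_nonneg _),
    ENNReal.ofReal_le_ofReal_iff (by positivity)] at total_mass

theorem eq_of_errD_pure_le {c h : Z → L} {z : Z} (hα : α < 1)
    (herr : errD (PMF.pure z) c h ≤ ENNReal.ofReal α) : h z = c z := by
  classical
  by_contra hne
  have : errD (PMF.pure z) c h = 1 := by
    rw [errD, prOf, PMF.toOuterMeasure_pure_apply]
    exact if_pos hne
  rw [this, ENNReal.one_le_ofReal] at herr
  exact hα.not_ge herr

theorem PACLearner.two_mul_le_exp {C : Set (Z → L)} {A : (Fin m → Z × L) → PMF (Z → L)}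
    (hPAC : PACLearner α β C A) (hA : DPAlg ε A) (hα : α < 1) {c₀ c₁ : Z → L} (hc₀ : c₀ ∈ C)
    (hc₁ : c₁ ∈ C) {z : Z} (hz : c₀ z ≠ c₁ z) : 2 * (1 - β) ≤ Real.exp (m * ε) := by
  classical
  have card_le_one (h : Z → L) : #{t | errD (PMF.pure z) (bif t then c₁ else c₀) h ≤
      ENNReal.ofReal α} ≤ 1 := by
    refine Finset.card_le_one.2 fun t ht t' ht' => ?_
    have ht := eq_of_errD_pure_le hα (Finset.mem_filter.1 ht).2
    have ht' := eq_of_errD_pure_le hα (Finset.mem_filter.1 ht').2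
    cases t <;> cases t' <;> simp_all
  simpa [mul_comm] using hPAC.mul_card_le_of_card_accurate_le hA (fun _ => (z, c₀ z))
    (Bool.forall_bool.2 ⟨hc₀, hc₁⟩) (fun _ => PMF.pure z) card_le_one

theorem sum_exp_mul_card_sub_two_mul_card_le [Fintype ι] (μ : ℝ) :
    ∑ s : Finset ι, Real.exp (μ * (Fintype.card ι - 2 * #s)) ≤
      2 ^ Fintype.card ι * Real.exp (μ ^ 2 / 2 * Fintype.card ι) := by
  have weight_eq (s : Finset ι) : Real.exp (μ * (Fintype.card ι - 2 * #s)) =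
      Real.exp (-μ) ^ #s * Real.exp μ ^ (Fintype.card ι - #s) := by
    rw [← Real.exp_nat_mul, ← Real.exp_nat_mul, ← Real.exp_add, Nat.cast_sub s.card_le_univ]
    ring_nf
  calc ∑ s : Finset ι, Real.exp (μ * (Fintype.card ι - 2 * #s))
      = (Real.exp (-μ) + Real.exp μ) ^ Fintype.card ι := by
        simp only [weight_eq]
        exact Fintype.sum_pow_mul_eq_add_pow ι _ _
    _ = 2 ^ Fintype.card ι * Real.cosh μ ^ Fintype.card ι := by
        rw [← mul_pow, Real.cosh_eq]
        ring_nf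
    _ ≤ 2 ^ Fintype.card ι * Real.exp (μ ^ 2 / 2) ^ Fintype.card ι := by
        gcongr
        exact Real.cosh_le_exp_half_sq μ
    _ = 2 ^ Fintype.card ι * Real.exp (μ ^ 2 / 2 * Fintype.card ι) := by
        rw [← Real.exp_nat_mul, mul_comm (Fintype.card ι : ℝ)]

/-- Hoeffding's inequality for the size of a uniformly random subset. -/
theorem card_finset_card_le_mul_le [Fintype ι] (hα : α ≤ 1 / 2) :
    (#{s : Finset ι | (#s : ℝ) ≤ α * Fintype.card ι} : ℝ) ≤
      2 ^ Fintype.card ι * Real.exp (-((1 - 2 * α) ^ 2 / 2 * Fintype.card ι)) := by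
  set n := Fintype.card ι
  set μ := 1 - 2 * α with hμ
  have weight_ge (s : Finset ι) (hs : (#s : ℝ) ≤ α * n) :
      Real.exp (μ ^ 2 * n) ≤ Real.exp (μ * (n - 2 * #s)) := by
    rw [sq, mul_assoc]
    gcongr
    · linarith
    · rw [hμ]; linarith
  have markov : #{s : Finset ι | (#s : ℝ) ≤ α * n} * Real.exp (μ ^ 2 * n) ≤
      2 ^ n * Real.exp (μ ^ 2 / 2 * n) := by
    rw [← nsmul_eq_mul]
    calc _ ≤ ∑ s : Finset ι with (#s : ℝ) ≤ α * n, Real.exp (μ * (n - 2 * #s)) :=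
          Finset.card_nsmul_le_sum _ _ _ fun s hs => weight_ge s (Finset.mem_filter.1 hs).2
      _ ≤ ∑ s : Finset ι, Real.exp (μ * (n - 2 * #s)) :=
          Finset.sum_le_univ_sum_of_nonneg fun _ => (Real.exp_pos _).le
      _ ≤ _ := sum_exp_mul_card_sub_two_mul_card_le μ
  rw [← le_div_iff₀ (Real.exp_pos _), mul_div_assoc, ← Real.exp_sub] at markov
  refine markov.trans_eq ?_
  ring_nf

/-- A Littlestone tree of depth `d` for `C`: a complete binary tree whose nodes carry points and
all of whose branches, seen as labelings of the points along them, are realized in `C`. A branch is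
a bit string `t`; its bits are read from the highest index down, so that `query i t`, the point at
level `i`, may depend only on the bits above `i`. -/
structure LittlestoneTree (C : Set (Z → Bool)) (d : ℕ) where
  query : Fin d → (Fin d → Bool) → Z
  query_congr {i : Fin d} {t t' : Fin d → Bool} (h : ∀ j, i < j → t j = t' j) :
    query i t = query i t'
  concept : (Fin d → Bool) → Z → Bool
  concept_mem (t : Fin d → Bool) : concept t ∈ C
  concept_query (t : Fin d → Bool) (i : Fin d) : concept t (query i t) = t i

namespace LittlestoneTree

variable {C : Set (Z → Bool)} {d : ℕ}

/-- The levels at which a hypothesis mislabels the branch `t`. -/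
def mistakes (T : LittlestoneTree C d) (h : Z → Bool) (t : Fin d → Bool) : Finset (Fin d) :=
  {i | h (T.query i t) ≠ t i}

theorem mistakes_injective (T : LittlestoneTree C d) (h : Z → Bool) :
    Function.Injective (T.mistakes h) := by
  intro t t' htt'
  funext i
  induction i using WellFoundedGT.induction with
  | ind i ih =>
    have mem_iff : i ∈ T.mistakes h t ↔ i ∈ T.mistakes h t' := by rw [htt']
    simp only [mistakes, Finset.mem_filter_univ, ← T.query_congr ih] at mem_iff
    revert mem_iff
    cases h (T.query i t) <;> cases t i <;> cases t' i <;> simp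

/-- The uniform distribution on the points along the branch `t`, on which the error of a
hypothesis is its fraction of mistakes. -/
noncomputable def branchDist (T : LittlestoneTree C d) [NeZero d] (t : Fin d → Bool) : PMF Z :=
  (PMF.uniformOfFintype (Fin d)).map (T.query · t)

theorem errD_branchDist (T : LittlestoneTree C d) [NeZero d] (h : Z → Bool) (t : Fin d → Bool) :
    errD (T.branchDist t) (T.concept t) h = #(T.mistakes h t) / d := by
  classical
  rw [errD, prOf, branchDist, PMF.toOuterMeasure_map_apply,
    PMF.toOuterMeasure_uniformOfFintype_apply, Fintype.card_fin, Fintype.card_subtype]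
  simp only [Set.mem_preimage, Set.mem_ofPred_eq, T.concept_query, mistakes]

theorem errD_branchDist_le_iff (T : LittlestoneTree C d) [NeZero d] (hα : 0 ≤ α) (h : Z → Bool)
    (t : Fin d → Bool) : errD (T.branchDist t) (T.concept t) h ≤ ENNReal.ofReal α ↔
      (#(T.mistakes h t) : ℝ) ≤ α * d := by
  rw [errD_branchDist, ENNReal.div_le_iff (NeZero.ne _) (ENNReal.natCast_ne_top d),
    ← ENNReal.ofReal_natCast, ← ENNReal.ofReal_natCast, ← ENNReal.ofReal_mul hα,
    ENNReal.ofReal_le_ofReal_iff (by positivity)]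

theorem exists_concept_ne (T : LittlestoneTree C d) [NeZero d] :
    ∃ c₀ ∈ C, ∃ c₁ ∈ C, ∃ z, c₀ z ≠ c₁ z := by
  refine ⟨_, T.concept_mem fun _ => false, _, T.concept_mem fun _ => true,
    T.query ⊤ fun _ => false, ?_⟩
  have root_eq : T.query ⊤ (fun _ => false) = T.query ⊤ fun _ => true :=
    T.query_congr fun j hj => (not_top_lt hj).elim
  rw [T.concept_query, root_eq, T.concept_query]
  exact Bool.false_ne_true

variable {A : (Fin m → Z × Bool) → PMF (Z → Bool)}

theorem one_sub_mul_two_pow_le (T : LittlestoneTree C d) [NeZero d] (hα : 0 ≤ α) (hA : DPAlg ε A)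
    (hPAC : PACLearner α β C A) :
    (1 - β) * 2 ^ d ≤ Real.exp (m * ε) * #{s : Finset (Fin d) | (#s : ℝ) ≤ α * d} := by
  classical
  have card_accurate_le (h : Z → Bool) :
      #{t | errD (T.branchDist t) (T.concept t) h ≤ ENNReal.ofReal α} ≤
        #{s : Finset (Fin d) | (#s : ℝ) ≤ α * d} := by
    refine Finset.card_le_card_of_injOn (T.mistakes h) (fun t ht => ?_)
      (T.mistakes_injective h).injOn
    simpa [T.errD_branchDist_le_iff hα] using ht
  simpa using hPAC.mul_card_le_of_card_accurate_le hA
    (fun _ => (T.query 0 fun _ => false, false)) T.concept_mem T.branchDist card_accurate_le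

theorem one_sub_le_exp (T : LittlestoneTree C d) [NeZero d] (hα₀ : 0 ≤ α) (hα : α ≤ 1 / 2)
    (hA : DPAlg ε A) (hPAC : PACLearner α β C A) :
    1 - β ≤ Real.exp (m * ε - (1 - 2 * α) ^ 2 / 2 * d) := by
  have hoeffding := card_finset_card_le_mul_le (ι := Fin d) hα
  rw [Fintype.card_fin] at hoeffding
  refine le_of_mul_le_mul_right ?_ (pow_pos two_pos d)
  calc (1 - β) * 2 ^ d
      ≤ Real.exp (m * ε) * #{s : Finset (Fin d) | (#s : ℝ) ≤ α * d} :=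
        T.one_sub_mul_two_pow_le hα₀ hA hPAC
    _ ≤ Real.exp (m * ε) * (2 ^ d * Real.exp (-((1 - 2 * α) ^ 2 / 2 * d))) := by gcongr
    _ = Real.exp (m * ε - (1 - 2 * α) ^ 2 / 2 * d) * 2 ^ d := by
        rw [sub_eq_add_neg (m * ε), Real.exp_add]
        ring

end LittlestoneTree

theorem stmt_1_general {C : Set (Z → Bool)} {d : ℕ} (T : LittlestoneTree C d) (hε : 0 ≤ ε)
    (hα₀ : 0 ≤ α) (hα : α ≤ 1 / 2) (hβ₀ : 0 ≤ β) (hβ : β ≤ 1 / 2)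
    {A : (Fin m → Z × Bool) → PMF (Z → Bool)} (hA : DPAlg ε A) (hPAC : PACLearner α β C A) :
    (1 - 2 * α) ^ 2 / 2 * Real.logb 2 (2 * (1 - β)) * d ≤ m * ε := by
  rcases eq_zero_or_neZero d with rfl | _
  · simpa using mul_nonneg m.cast_nonneg hε
  obtain ⟨c₀, hc₀, c₁, hc₁, z, hz⟩ := T.exists_concept_ne
  have depth_one : Real.log (2 * (1 - β)) ≤ m * ε :=
    (Real.log_le_iff_le_exp (by linarith)).2 (hPAC.two_mul_le_exp hA (by linarith) hc₀ hc₁ hz)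
  have depth_d : Real.log (1 - β) ≤ m * ε - (1 - 2 * α) ^ 2 / 2 * d :=
    (Real.log_le_iff_le_exp (by linarith)).2 (T.one_sub_le_exp hα₀ hα hA hPAC)
  have log_one_sub_nonpos : Real.log (1 - β) ≤ 0 := Real.log_nonpos (by linarith) (by linarith)
  have log_nonneg : 0 ≤ Real.log (2 * (1 - β)) := Real.log_nonneg (by linarith)
  have log_split : Real.log (2 * (1 - β)) = Real.log 2 + Real.log (1 - β) :=
    Real.log_mul two_ne_zero (by linarith)
  -- `depth_d` is void for small `d`; the right multiple of `depth_one` absorbs `log (1 - β)`.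
  have combined : Real.log (2 * (1 - β)) * ((1 - 2 * α) ^ 2 / 2 * d) ≤ m * ε * Real.log 2 := by
    rw [← sub_eq_iff_eq_add.2 log_split]
    linarith [mul_le_mul_of_nonneg_left depth_d log_nonneg,
      mul_le_mul_of_nonneg_left depth_one (neg_nonneg.2 log_one_sub_nonpos)]
  rw [Real.logb, mul_div_assoc', div_mul_eq_mul_div, div_le_iff₀ (Real.log_pos one_lt_two)]
  linarith

end PrivateLearning

section Thresholds

variable {b c : ℕ}

/-- The binary search query that decides bit `i` of `t`: the bits above `i` agree with `t`, bit `i`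
is `0` and the bits below are `1`. -/
def searchPoint (t : Fin b → Bool) (i : Fin b) : Fin b → Bool :=
  fun j => if i < j then t j else decide (j < i)

theorem searchPoint_congr {t t' : Fin b → Bool} {i : Fin b} (h : ∀ j, i < j → t j = t' j) :
    searchPoint t i = searchPoint t' i :=
  funext fun j => ite_congr rfl (h j) fun _ => rfl

theorem searchPoint_cons_zero (a : Bool) (t : Fin b → Bool) :
    searchPoint (Fin.cons a t : Fin (b + 1) → Bool) 0 = Fin.cons false t := by
  funext j
  cases j using Fin.cases <;> simp [searchPoint]

theorem searchPoint_cons_succ (a : Bool) (t : Fin b → Bool) (i : Fin b) :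
    searchPoint (Fin.cons a t : Fin (b + 1) → Bool) i.succ = Fin.cons true (searchPoint t i) := by
  funext j
  cases j using Fin.cases <;> simp [searchPoint]

theorem bitsToNat_cons (a : Bool) (t : Fin b → Bool) :
    bitsToNat (Fin.cons a t : Fin (b + 1) → Bool) = a.toNat + 2 * bitsToNat t := by
  simp only [bitsToNat, Fin.sum_univ_succ, Fin.cons_zero, Fin.cons_succ, Fin.val_succ,
    Finset.mul_sum, mul_ite, mul_zero, pow_succ']
  cases a <;> simp

theorem bitsToNat_le_searchPoint_iff (t : Fin b → Bool) (i : Fin b) :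
    bitsToNat t ≤ bitsToNat (searchPoint t i) ↔ t i = false := by
  induction b with
  | zero => exact i.elim0
  | succ b ih =>
    cases t using Fin.consCases with
    | cons a t =>
      cases i using Fin.cases with
      | zero =>
        rw [searchPoint_cons_zero, bitsToNat_cons, bitsToNat_cons]
        cases a <;> simp
      | succ i =>
        have := a.toNat_le
        rw [searchPoint_cons_succ, bitsToNat_cons, bitsToNat_cons, Fin.cons_succ, ← ih t i,
          Bool.toNat_true]
        omega

theorem Thr_searchPoint (t : Fin b → Bool) (i : Fin b) : Thr t (searchPoint t i) = !t i := by
  rw [Bool.eq_iff_iff, Thr, decide_eq_true_iff, bitsToNat_le_searchPoint_iff, Bool.not_eq_true']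

theorem Par_zero (x : Fin c → Bool) : Par (fun _ => false) x = false := by
  simp [Par, xorFold]

/-- Binary search as a Littlestone tree. A threshold answers the query for bit `i` with the
negation of that bit, so the branch `t` is realized by the threshold whose bits are those of `t`
negated. -/
def binarySearchTree (b c : ℕ) : LittlestoneTree (ParityThresh b c) b where
  query i t := (fun _ => false, searchPoint (fun j => !t j) i)
  query_congr h := congrArg _ (searchPoint_congr fun j hj => congrArg _ (h j hj))
  concept t p := xor (Par (fun _ => false) p.1) (Thr (fun j => !t j) p.2)
  concept_mem _ := ⟨_, _, rfl⟩
  concept_query t i := by rw [Par_zero, Thr_searchPoint, Bool.false_xor, Bool.not_not]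

end Thresholds

/-- there is a constant `C > 0` such that every `ε`-DP `(1/4,1/4)`-PAC learner
for `ParityThresh_{b,c}` in the curator model has sample complexity `m ≥ C·b/ε`. -/
theorem stmt_1 : ∃ C : ℝ, 0 < C ∧
    ∀ (b c m : ℕ) (ε : ℝ), 0 < ε →
      ∀ A : (Fin m → ((Fin c → Bool) × (Fin b → Bool)) × Bool) →
            PMF ((Fin c → Bool) × (Fin b → Bool) → Bool),
        DPAlg ε A → PACLearner (1/4) (1/4) (ParityThresh b c) A →
        C * (b : ℝ) / ε ≤ (m : ℝ) := by
  refine ⟨(1 - 2 * (1 / 4)) ^ 2 / 2 * Real.logb 2 (2 * (1 - 1 / 4)),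
    mul_pos (by norm_num) (Real.logb_pos one_lt_two (by norm_num)),
    fun b c m ε hε A hA hPAC => (div_le_iff₀ hε).2 ?_⟩
  exact stmt_1_general (binarySearchTree b c) hε.le (by norm_num) (by norm_num) (by norm_num)
    (by norm_num) hA hPAC
end

section
/- Let X be a finite set, D_0, D_1 probability distributions on X, ε > 0, and 0 < γ ≤ 1/2. Suppose there exists a non-interactive ε-differentially private protocol in the (m,n)-hybrid model that tests between D_0 and D_1 with success probability 1/2 + γ, i.e., for each j ∈ {0,1}, when all m + n inputs are drawn i.i.d. from D_j, the protocol outputs j with probability at least 1/2 + γ. Then either there exists an ε-differentially private algorithm B : X^m → PMF({0,1}) such that for each j ∈ {0,1}, on m i.i.d. samples from D_j, B outputs j with probability at least 1/2 + γ/4, or there exists a non-interactive ε-differentially private protocol in the local model with n agents such that for each j ∈ {0,1}, on n i.i.d. inputs from D_j, it outputs j with probability at least 1/2 + γ/4. -/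
open scoped ENNReal

/-!
Under either hypothesis, the curator's message `s` and the agents' messages `t` are independent.
Replacing first the hypothesis behind `s` and then the one behind `t` splits the advantage of the
referee, which is at least `2γ`, into the advantage of a test that simulates `t` under hypothesis
`1` and that of a test that simulates `s` under hypothesis `0`, so one of these is at least `γ`.
A test of advantage `γ` may err mostly under one hypothesis; tossing a fair coin and, on tails,
answering by a suitably biased coin instead makes it correct with probability at least `1/2 + γ/4`
under both.
Simulation and balancing are post-processing, so privacy is preserved.
-/

section Probability

variable {Y Z : Type*}

theorem prOf_singleton (P : PMF Y) (y : Y) : prOf P {y} = P y :=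
  P.toOuterMeasure_apply_singleton y

theorem prOf_bind (P : PMF Y) (h : Y → PMF Z) (T : Set Z) :
    prOf (P.bind h) T = ∑' y, P y * prOf (h y) T :=
  P.toOuterMeasure_bind_apply h T

theorem toReal_apply_false (P : PMF Bool) : (P false).toReal = 1 - (P true).toReal := by
  have hsum : P false + P true = 1 := by rw [← tsum_bool, P.tsum_coe]
  rw [eq_sub_iff_add_eq, ← ENNReal.toReal_add (P.apply_ne_top _) (P.apply_ne_top _), hsum,
    ENNReal.toReal_one]

theorem map_not_apply (P : PMF Bool) (b : Bool) : P.map not b = P (!b) := by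
  rw [PMF.map_apply, tsum_bool]
  cases b <;> simp

/-- The law that samples from `P` or from `Q` according to a fair coin. -/
noncomputable def fairMix (P Q : PMF Y) : PMF Y :=
  (PMF.uniformOfFintype Bool).bind fun b => cond b P Q

theorem toReal_fairMix_apply (P Q : PMF Y) (y : Y) :
    (fairMix P Q y).toReal = ((P y).toReal + (Q y).toReal) / 2 := by
  have hmix : fairMix P Q y = 2⁻¹ * (P y + Q y) := by
    simp [fairMix, PMF.bind_apply, mul_add]
  rw [hmix, ENNReal.toReal_mul, ENNReal.toReal_add (P.apply_ne_top y) (Q.apply_ne_top y),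
    ENNReal.toReal_inv, ENNReal.toReal_ofNat, inv_mul_eq_div]

theorem bind_fairMix (P : PMF Y) (g h : Y → PMF Z) :
    (P.bind fun y => fairMix (g y) (h y)) = fairMix (P.bind g) (P.bind h) := by
  unfold fairMix
  rw [PMF.bind_comm]
  congr 1
  funext b
  cases b <;> rfl

end Probability

theorem DPAlg.bind {X Y Z : Type*} {m : ℕ} {ε : ℝ} {A : (Fin m → X) → PMF Y}
    (hA : DPAlg ε A) (h : Y → PMF Z) : DPAlg ε fun x => (A x).bind h := by
  intro x x' hx T
  have hpoint (y : Y) : A x y ≤ ENNReal.ofReal (Real.exp ε) * A x' y := by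
    simpa only [prOf_singleton] using hA x x' hx {y}
  calc prOf ((A x).bind h) T
      = ∑' y, A x y * prOf (h y) T := prOf_bind _ _ _
    _ ≤ ∑' y, ENNReal.ofReal (Real.exp ε) * A x' y * prOf (h y) T :=
        ENNReal.tsum_le_tsum fun y => by gcongr; exact hpoint y
    _ = ENNReal.ofReal (Real.exp ε) * prOf ((A x').bind h) T := by
        simp only [mul_assoc, ENNReal.tsum_mul_left, prOf_bind]

section Testing

/-- Success probability at least `p` for a test between two hypotheses indexed by `Bool`: whichever
hypothesis `j` holds, the test answers `j` with probability at least `p`. The test is encoded by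
the laws `O j` of its answer under hypothesis `j`. -/
def TestsWithProb (p : ℝ) (O : Bool → PMF Bool) : Prop :=
  ∀ j, ENNReal.ofReal p ≤ prOf (O j) {j}

/-- The advantage of a test with answer laws `O`: the excess of its probability of answering `true`
under hypothesis `true` over that under hypothesis `false`. -/
noncomputable def advantage (O : Bool → PMF Bool) : ℝ :=
  (O true true).toReal - (O false true).toReal

variable {S T Y : Type*} {p γ : ℝ}

theorem TestsWithProb.two_mul_sub_one_le_advantage {O : Bool → PMF Bool}
    (hO : TestsWithProb p O) : 2 * p - 1 ≤ advantage O := by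
  have hsuccess (j : Bool) : p ≤ (O j j).toReal := by
    rw [← ENNReal.ofReal_le_iff_le_toReal ((O j).apply_ne_top j), ← prOf_singleton]
    exact hO j
  have hfalse := hsuccess false
  rw [toReal_apply_false] at hfalse
  unfold advantage
  linarith [hsuccess true]

/-- The sample-independent coin that counterbalances a test with answer laws `O`: it says `true` as
often as the test says `false`, averaged over the two hypotheses. -/
noncomputable def counterweight (O : Bool → PMF Bool) : PMF Bool :=
  (fairMix (O false) (O true)).map not

theorem toReal_fairMix_counterweight_apply (O : Bool → PMF Bool) (j : Bool) :
    (fairMix (O j) (counterweight O) j).toReal = 1 / 2 + advantage O / 4 := by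
  simp only [toReal_fairMix_apply, counterweight, map_not_apply, advantage]
  cases j <;> simp only [Bool.not_true, Bool.not_false, toReal_apply_false] <;> ring

theorem exists_testsWithProb_of_le_advantage (P : Bool → PMF Y) (g : Y → PMF Bool)
    (hγ : γ ≤ advantage fun j => (P j).bind g) :
    ∃ h : Y → PMF Bool, TestsWithProb (1 / 2 + γ / 4) fun j => (P j).bind h := by
  let O : Bool → PMF Bool := fun j => (P j).bind g
  refine ⟨fun y => fairMix (g y) (counterweight O), fun j => ?_⟩
  simp only [prOf_singleton, bind_fairMix, PMF.bind_const]
  apply ENNReal.ofReal_le_of_le_toReal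
  calc 1 / 2 + γ / 4
      ≤ 1 / 2 + advantage O / 4 := by gcongr
    _ = (fairMix (O j) (counterweight O) j).toReal := (toReal_fairMix_counterweight_apply O j).symm

theorem advantage_bind_bind (P : Bool → PMF S) (Q : Bool → PMF T) (f : S → T → PMF Bool) :
    (advantage fun j => (P j).bind fun s => (Q j).bind (f s)) =
      (advantage fun j => (P j).bind fun s => (Q true).bind (f s)) +
        advantage fun j => (Q j).bind fun t => (P false).bind fun s => f s t := by
  simp only [advantage, PMF.bind_comm (Q _) (P false)]
  ring

theorem TestsWithProb.exists_left_or_right {P : Bool → PMF S} {Q : Bool → PMF T}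
    {f : S → T → PMF Bool}
    (hf : TestsWithProb (1 / 2 + γ) fun j => (P j).bind fun s => (Q j).bind (f s)) :
    (∃ h : S → PMF Bool, TestsWithProb (1 / 2 + γ / 4) fun j => (P j).bind h) ∨
      ∃ h : T → PMF Bool, TestsWithProb (1 / 2 + γ / 4) fun j => (Q j).bind h := by
  have hsum := hf.two_mul_sub_one_le_advantage
  rw [advantage_bind_bind] at hsum
  rcases le_or_gt γ (advantage fun j => (P j).bind fun s => (Q true).bind (f s)) with hP | hP
  · exact Or.inl (exists_testsWithProb_of_le_advantage P _ hP)
  · exact Or.inr (exists_testsWithProb_of_le_advantage Q _ (by linarith))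

end Testing

/-- if a non-interactive `ε`-DP protocol in the `(m,n)`-hybrid model tests between
`D_0` and `D_1` with success probability `1/2 + γ`, then either there is an `ε`-DP curator
algorithm on `m` samples succeeding with probability `1/2 + γ/4`, or there is a non-interactive
`ε`-DP local protocol with `n` agents succeeding with probability `1/2 + γ/4`.
(`j ∈ {0,1}` is encoded by `j : Bool`, with `D j = if j then D1 else D0`.) -/
theorem stmt_5 (X : Type) (D0 D1 : PMF X) (m n : ℕ) (ε γ : ℝ)
    (hε : 0 < ε) (hγ0 : 0 < γ) (hγ : γ ≤ 1 / 2)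
    (T0 : Type) (Ti : Fin n → Type)
    (Cur : (Fin m → X) → PMF T0)
    (R : ∀ i : Fin n, X → PMF (Ti i))
    (ref : T0 → (∀ i, Ti i) → PMF Bool)
    (hCur : DPAlg ε Cur) (hR : ∀ i, DPRand ε (R i))
    (hTest : ∀ j : Bool,
      ENNReal.ofReal (1 / 2 + γ) ≤
        prOf ((iid (if j then D1 else D0) m).bind fun xs =>
               (iid (if j then D1 else D0) n).bind fun ys =>
               (Cur xs).bind fun t0 =>
               (pmfPi n (fun i => R i (ys i))).bind fun ms =>
               ref t0 ms) {j}) :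
    (∃ B : (Fin m → X) → PMF Bool, DPAlg ε B ∧
        ∀ j : Bool, ENNReal.ofReal (1 / 2 + γ / 4) ≤
          prOf ((iid (if j then D1 else D0) m).bind B) {j}) ∨
    (∃ (Mi : Fin n → Type) (R' : ∀ i : Fin n, X → PMF (Mi i))
        (ref' : (∀ i, Mi i) → PMF Bool),
        (∀ i, DPRand ε (R' i)) ∧
        ∀ j : Bool, ENNReal.ofReal (1 / 2 + γ / 4) ≤
          prOf ((iid (if j then D1 else D0) n).bind fun ys =>
                 (pmfPi n (fun i => R' i (ys i))).bind ref') {j}) := by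
  let D : Bool → PMF X := fun j => if j then D1 else D0
  let curatorMessage : Bool → PMF T0 := fun j => (iid (D j) m).bind Cur
  let agentMessages : Bool → PMF (∀ i, Ti i) := fun j =>
    (iid (D j) n).bind fun ys => pmfPi n fun i => R i (ys i)
  have hReferee : TestsWithProb (1 / 2 + γ) fun j =>
      (curatorMessage j).bind fun t0 => (agentMessages j).bind (ref t0) := by
    intro j
    simpa only [curatorMessage, agentMessages, D, PMF.bind_bind,
      PMF.bind_comm (iid _ n) (Cur _)] using hTest j
  obtain ⟨h, hh⟩ | ⟨h, hh⟩ := hReferee.exists_left_or_right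
  · refine Or.inl ⟨fun xs => (Cur xs).bind h, hCur.bind h, fun j => ?_⟩
    simpa only [curatorMessage, D, PMF.bind_bind] using hh j
  · refine Or.inr ⟨Ti, R, h, hR, fun j => ?_⟩
    simpa only [agentMessages, D, PMF.bind_bind] using hh j
end

section
/- Let c, d, m ∈ ℕ with d ≤ c. For every (not necessarily differentially private) randomized algorithm A taking m data points of the 1-out-of-2^d-parity task and outputting an element of {0,1}^c, there exists an instance — pairwise distinct strings (r_j)_{j∈{0,1}^d} in {0,1}^c and shares s_1,…,s_{m+1} ∈ {0,1}^d — such that the probability that A outputs r_s is at most 2^{−d}, where the probability is over the m i.i.d. data points generated from the instance and A's coins. In particular, a trusted curator holding only m examples cannot solve the 1-out-of-2^d-parity task with success probability 3/4 when d ≥ 2. -/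
open scoped ENNReal

/-- A data point of the 1-out-of-`2^d`-parity task: either `(x, (⟨x,r_j⟩)_j)` or `(t, s_t)`. -/
abbrev ParPoint (c d m : ℕ) : Type :=
  ((Fin c → Bool) × ((Fin d → Bool) → Bool)) ⊕ (Fin (m + 1) × (Fin d → Bool))

/-- The secret index `s = s_1 ⊕ ⋯ ⊕ s_{m+1}` determined by the shares. -/
def sOf {d m : ℕ} (sh : Fin (m + 1) → Fin d → Bool) : Fin d → Bool :=
  fun j => xorFold fun t => sh t j

/-- The data-point distribution of the 1-out-of-`2^d`-parity task. -/
noncomputable def oneOutDist (c d m : ℕ) (r : (Fin d → Bool) → Fin c → Bool)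
    (sh : Fin (m + 1) → Fin d → Bool) : PMF (ParPoint c d m) :=
  (PMF.uniformOfFintype Bool).bind fun flip =>
    if flip then
      (PMF.uniformOfFintype (Fin c → Bool)).map fun x => Sum.inl (x, fun j => Par (r j) x)
    else
      (PMF.uniformOfFintype (Fin (m + 1))).map fun t => Sum.inr (t, sh t)

/-!
Fix any injective `r` and draw the `m + 1` shares uniformly at random. At most `m` of them occur
among the `m` data points, so for each data set `z` there is a share `t` on which the likelihood of
`z` does not depend. Translating share `t` by `a` preserves the likelihood of `z` and translates the
secret by `a`; hence the secret is uniform given `z`, and no guess based on `z` hits `r_s` with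
probability more than `2^{-d}`. Some choice of the shares is at least as bad as this average.

Throughout, bit strings are added using the Boolean ring structure on `Bool`, whose addition is XOR.
-/

lemma natCast_bool_eq_decide (n : ℕ) : (n : Bool) = decide (n % 2 = 1) := by
  have : CharP Bool 2 := CharTwo.of_one_ne_zero_of_two_eq_zero (by decide) (by decide)
  rcases Nat.mod_two_eq_zero_or_one n with hn | hn <;> rw [CharTwo.natCast_eq_mod, hn] <;> rfl

lemma xorFold_eq_sum {I : Type*} [Fintype I] (f : I → Bool) : xorFold f = ∑ i, f i := by
  rw [xorFold, ← natCast_bool_eq_decide, Finset.natCast_card_filter]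
  exact Finset.sum_congr rfl fun i _ => by cases f i <;> rfl

lemma sOf_eq_sum {d m : ℕ} (sh : Fin (m + 1) → Fin d → Bool) : sOf sh = ∑ t, sh t := by
  ext j
  rw [sOf, xorFold_eq_sum, Finset.sum_apply]

section SecretSharing

lemma sum_pmf_comp_le_one {α β : Type*} [Fintype α] (p : PMF β) {f : α → β}
    (hf : Function.Injective f) : ∑ a, p (f a) ≤ 1 := by
  rw [← tsum_fintype (L := .unconditional _), ← p.tsum_coe]
  exact ENNReal.tsum_comp_le_tsum_of_injective hf p

variable {ι G : Type*} [Fintype ι] [Fintype G] [AddCommGroup G]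

lemma card_nsmul_sum_mul_comp_sum_of_dependsOn [DecidableEq ι] {R : Type*}
    [NonUnitalNonAssocSemiring R] {L : (ι → G) → R} {t : ι} (hL : DependsOn L {t}ᶜ) (p : G → R) :
    Fintype.card G • ∑ sh, L sh * p (∑ i, sh i) = (∑ sh, L sh) * ∑ g, p g := by
  have shift (a : G) : ∑ sh, L sh * p (∑ i, sh i) = ∑ sh, L sh * p ((∑ i, sh i) + a) := by
    rw [← Equiv.sum_comp (Equiv.addRight (Pi.single t a))]
    refine Finset.sum_congr rfl fun sh _ => ?_
    have hLsh : L (sh + Pi.single t a) = L sh :=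
      hL fun i hi => by simp [Pi.single_eq_of_ne hi]
    simp [hLsh, Finset.sum_add_distrib]
  calc Fintype.card G • ∑ sh, L sh * p (∑ i, sh i)
      = ∑ _a : G, ∑ sh, L sh * p (∑ i, sh i) := by simp
    _ = ∑ a : G, ∑ sh, L sh * p ((∑ i, sh i) + a) := Finset.sum_congr rfl fun a _ => shift a
    _ = ∑ sh, L sh * ∑ a, p ((∑ i, sh i) + a) := by
        rw [Finset.sum_comm]
        simp only [Finset.mul_sum]
    _ = ∑ sh, L sh * ∑ g, p g :=
        Finset.sum_congr rfl fun sh _ =>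
          congrArg (L sh * ·) (Equiv.sum_comp (Equiv.addLeft (∑ i, sh i)) p)
    _ = (∑ sh, L sh) * ∑ g, p g := (Finset.sum_mul ..).symm

variable {Z Y : Type*} {P : (ι → G) → PMF Z} {f : G → Y}

lemma card_mul_sum_bind_apply_le [DecidableEq ι]
    (hP : ∀ z, ∃ t, DependsOn (fun sh => P sh z) {t}ᶜ) (hf : Function.Injective f) (A : Z → PMF Y) :
    Fintype.card G * ∑ sh, ((P sh).bind A) (f (∑ i, sh i)) ≤ Fintype.card (ι → G) := by
  have bound (z : Z) :
      Fintype.card G * ∑ sh, P sh z * A z (f (∑ i, sh i)) ≤ ∑ sh, P sh z := by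
    obtain ⟨t, ht⟩ := hP z
    rw [← nsmul_eq_mul, card_nsmul_sum_mul_comp_sum_of_dependsOn ht fun g => A z (f g)]
    exact mul_le_of_le_one_right' (sum_pmf_comp_le_one (A z) hf)
  calc Fintype.card G * ∑ sh, ((P sh).bind A) (f (∑ i, sh i))
      = ∑' z, Fintype.card G * ∑ sh, P sh z * A z (f (∑ i, sh i)) := by
        simp only [PMF.bind_apply, ENNReal.tsum_mul_left]
        rw [Summable.tsum_finsetSum fun _ _ => ENNReal.summable]
    _ ≤ ∑' z, ∑ sh, P sh z := ENNReal.tsum_le_tsum bound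
    _ = ∑ sh, ∑' z, P sh z := Summable.tsum_finsetSum fun _ _ => ENNReal.summable
    _ = Fintype.card (ι → G) := by simp [PMF.tsum_coe]

lemma exists_bind_apply_sum_le_inv_card (hP : ∀ z, ∃ t, DependsOn (fun sh => P sh z) {t}ᶜ)
    (hf : Function.Injective f) (A : Z → PMF Y) :
    ∃ sh : ι → G, ((P sh).bind A) (f (∑ i, sh i)) ≤ (Fintype.card G : ℝ≥0∞)⁻¹ := by
  classical
  have average : ∑ sh : ι → G, Fintype.card G * ((P sh).bind A) (f (∑ i, sh i)) ≤
      ∑ _sh : ι → G, 1 := by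
    simpa [Finset.mul_sum] using card_mul_sum_bind_apply_le hP hf A
  obtain ⟨sh, -, hsh⟩ := ENNReal.exists_le_of_sum_le Finset.univ_nonempty average
  exact ⟨sh, ENNReal.le_inv_iff_mul_le.2 (by rwa [mul_comm])⟩

end SecretSharing

lemma iid_apply {Z : Type*} (D : PMF Z) {m : ℕ} (z : Fin m → Z) : iid D m z = ∏ i, D (z i) := by
  classical
  induction m with
  | zero => simp [iid, Subsingleton.elim z fun i => i.elim0]
  | succ m ih =>
    cases z using Fin.consCases with
    | _ x z =>
      simp [iid, PMF.bind_apply, PMF.pure_apply, Fin.cons_inj, ite_and, ih, Fin.prod_univ_succ,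
        mul_comm]

lemma exists_forall_ne_inr_of_card_lt {ι κ α β : Type*} [Fintype ι] [Fintype κ]
    (h : Fintype.card ι < Fintype.card κ) (z : ι → α ⊕ κ × β) :
    ∃ t, ∀ i b, z i ≠ Sum.inr (t, b) := by
  by_contra! hz
  choose i b hib using hz
  have hi : Function.Injective i := fun t t' htt' => by
    have heq : (Sum.inr (t, b t) : α ⊕ κ × β) = Sum.inr (t', b t') :=
      (hib t).symm.trans (htt' ▸ hib t')
    exact congrArg Prod.fst (Sum.inr.inj heq)
  exact h.not_ge (Fintype.card_le_of_injective i hi)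

section OneOutOfParity

variable {c d m : ℕ} {r : (Fin d → Bool) → Fin c → Bool}

lemma dependsOn_oneOutDist_apply (z : ParPoint c d m) :
    DependsOn (fun sh => oneOutDist c d m r sh z) {t | ∃ y, z = Sum.inr (t, y)} := by
  intro sh sh' hsh
  have reveal (t : Fin (m + 1)) : z = Sum.inr (t, sh t) ↔ z = Sum.inr (t, sh' t) :=
    ⟨fun hz => hsh t ⟨_, hz⟩ ▸ hz, fun hz => (hsh t ⟨_, hz⟩).symm ▸ hz⟩
  simp only [oneOutDist, PMF.bind_apply]
  refine tsum_congr fun flip => ?_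
  cases flip <;> simp [PMF.map_apply, reveal]

lemma exists_dependsOn_iid_oneOutDist_apply (z : Fin m → ParPoint c d m) :
    ∃ t, DependsOn (fun sh => iid (oneOutDist c d m r sh) m z) {t}ᶜ := by
  obtain ⟨t, ht⟩ := exists_forall_ne_inr_of_card_lt (by simp) z
  refine ⟨t, fun sh sh' hsh => ?_⟩
  simp only [iid_apply]
  refine Finset.prod_congr rfl fun i _ => dependsOn_oneOutDist_apply (z i) ?_
  rintro _ ⟨y, hy⟩
  exact hsh _ fun hst => ht i y (hst ▸ hy)

lemma exists_shares_prOf_le_half_pow (hr : Function.Injective r)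
    (A : (Fin m → ParPoint c d m) → PMF (Fin c → Bool)) :
    ∃ sh, prOf ((iid (oneOutDist c d m r sh) m).bind A) {r (sOf sh)} ≤ (1 / 2 : ℝ≥0∞) ^ d := by
  simpa [prOf, PMF.toOuterMeasure_apply_singleton, sOf_eq_sum, ENNReal.inv_pow] using
    exists_bind_apply_sum_le_inv_card exists_dependsOn_iid_oneOutDist_apply hr A

end OneOutOfParity

lemma half_pow_lt_ofReal_three_quarters {d : ℕ} (hd : 2 ≤ d) :
    (1 / 2 : ℝ≥0∞) ^ d < ENNReal.ofReal (3 / 4) :=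
  calc (1 / 2 : ℝ≥0∞) ^ d ≤ (1 / 2) ^ 2 := pow_le_pow_right_of_le_one' (by simp) hd
    _ = ENNReal.ofReal ((1 / 2) ^ 2) := by
        rw [ENNReal.ofReal_pow (by norm_num), ENNReal.ofReal_div_of_pos two_pos]
        simp
    _ < ENNReal.ofReal (3 / 4) := (ENNReal.ofReal_lt_ofReal_iff (by norm_num)).2 (by norm_num)

/-- for `d ≤ c`, every (not necessarily private) randomized algorithm taking `m`
data points of the 1-out-of-`2^d`-parity task has an instance with pairwise distinct strings
`(r_j)_j` on which it outputs `r_s` with probability at most `2^{−d}`. In particular, for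
`d ≥ 2` a trusted curator holding `m` examples cannot solve the task with success
probability `3/4`. -/
theorem stmt_14 (c d m : ℕ) (hdc : d ≤ c)
    (A : (Fin m → ParPoint c d m) → PMF (Fin c → Bool)) :
    (∃ (r : (Fin d → Bool) → Fin c → Bool) (sh : Fin (m + 1) → Fin d → Bool),
      Function.Injective r ∧
      prOf ((iid (oneOutDist c d m r sh) m).bind A) {r (sOf sh)} ≤ (1 / 2 : ℝ≥0∞) ^ d) ∧
    (2 ≤ d →
      ¬ ∀ (r : (Fin d → Bool) → Fin c → Bool) (sh : Fin (m + 1) → Fin d → Bool),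
        ENNReal.ofReal (3 / 4 : ℝ) ≤
          prOf ((iid (oneOutDist c d m r sh) m).bind A) {r (sOf sh)}) := by
  obtain ⟨r⟩ : Nonempty ((Fin d → Bool) ↪ (Fin c → Bool)) :=
    Function.Embedding.nonempty_of_card_le (by simpa using Nat.pow_le_pow_right two_pos hdc)
  obtain ⟨sh, hsh⟩ := exists_shares_prOf_le_half_pow r.injective A
  exact ⟨⟨r, sh, r.injective, hsh⟩,
    fun hd hall => (half_pow_lt_ofReal_three_quarters hd).not_ge ((hall r sh).trans hsh)⟩
end
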